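/- Let L be a finite-dimensional complex semisimple Lie algebra with Cartan subalgebra H, and let Δ be the set of roots of L with respect to H (nonzero functionals α on H with root space g^α ≠ {0}). Let λ : L → ℂ be a linear functional that vanishes on g^α for every α ∈ Δ. Then {X ∈ L | λ([X, Y]) = 0 for all Y ∈ L} = H ⊕ Σ_{β ∈ Δ_sing} g^β, where Δ_sing := {β ∈ Δ | λ([x, y]) = 0 for all x ∈ g^β and y ∈ g^{−β}}. -/

import Mathlib

/-!
The stabilizer of `λ` is a Lie subalgebra, and it contains `H`: `H` is abelian, and
`[H, g^α] ⊆ g^α ⊆ ker λ` for every root `α`. It is therefore `ad H`-stable, hence the sum of its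
intersections with `H` and the root spaces. These root spaces are lines, so each of them lies in the
stabilizer or meets it trivially. Finally, `λ` kills `[g^β, g^α]` whenever `α ≠ -β`, so `g^β` lies
in the stabilizer exactly when `β` is singular.
-/

open LieAlgebra LieModule

section HStable

variable {K L : Type*} [Field K] [CharZero K] [LieRing L] [LieAlgebra K L] [FiniteDimensional K L]
  [IsKilling K L] {H : LieSubalgebra K L} [H.IsCartanSubalgebra] [IsTriangularizable K H L]

lemma lieSubmodule_eq_inf_cartan_sup_iSup_rootSpace (N : LieSubmodule K H L) :
    N = (N ⊓ H.toLieSubmodule) ⊔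
      ⨆ (α : H.root) (_ : rootSpace H α.val ≤ N), rootSpace H α.val := by
  refine le_antisymm ?_ (sup_le inf_le_left (iSup₂_le fun _ hα ↦ hα))
  conv_lhs => rw [eq_iSup_inf_genWeightSpace (N := N)]
  refine iSup_le fun α ↦ ?_
  by_cases hα : α.IsZero
  · have rootSpace_eq : rootSpace H α = H.toLieSubmodule := by rw [hα.eq, rootSpace_zero_eq]
    exact rootSpace_eq ▸ le_sup_left
  by_cases hαN : rootSpace H α ≤ N
  · exact le_sup_of_le_right <| le_iSup₂_of_le ⟨α, by simpa using hα⟩ hαN inf_le_right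
  · have atom := Submodule.isAtom_iff_finrank_eq_one.mpr (IsKilling.finrank_rootSpace_eq_one α hα)
    have inf_eq_bot : N ⊓ rootSpace H α = ⊥ :=
      LieSubmodule.toSubmodule_injective (atom.not_le_iff_disjoint.mp hαN).symm.eq_bot
    exact inf_eq_bot.le.trans bot_le

lemma lieSubalgebra_eq_cartan_sup_iSup_rootSpace {S : LieSubalgebra K L} (hS : H ≤ S) :
    S.toSubmodule = H.toSubmodule ⊔
      ⨆ (α : H.root) (_ : (rootSpace H α.val).toSubmodule ≤ S.toSubmodule),
        (rootSpace H α.val).toSubmodule := by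
  let N : LieSubmodule K H L :=
    { S.toSubmodule with lie_mem := fun {h _} hx ↦ S.lie_mem (hS h.property) hx }
  have decomposition := congrArg LieSubmodule.toSubmodule
    (lieSubmodule_eq_inf_cartan_sup_iSup_rootSpace N)
  rw [inf_eq_right.mpr (show H.toLieSubmodule ≤ N from hS)] at decomposition
  simp only [LieSubmodule.sup_toSubmodule, LieSubmodule.iSup_toSubmodule] at decomposition
  exact decomposition

end HStable

section Stabilizer

variable {R L M : Type*} [CommRing R] [LieRing L] [LieAlgebra R L] [AddCommGroup M] [Module R M]

/-- The stabilizer of `lam` under the coadjoint action. Functionals are allowed to take values in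
any module `M`, regarded as a trivial representation of `L`. -/
def coadjointStabilizer (lam : L →ₗ[R] M) : LieSubalgebra R L where
  carrier := {X | ∀ Y, lam ⁅X, Y⁆ = 0}
  add_mem' hX hX' Y := by rw [add_lie, map_add, hX, hX', add_zero]
  zero_mem' Y := by rw [zero_lie, map_zero]
  smul_mem' c X hX Y := by rw [smul_lie, map_smul, hX, smul_zero]
  lie_mem' hX hX' Y := by rw [lie_lie, map_sub, hX, hX', sub_zero]

lemma apply_lie_eq_zero_of_mem_rootSpace_of_add_ne_zero {H : LieSubalgebra R L}
    [LieRing.IsNilpotent H] {lam : L →ₗ[R] M}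
    (hlam : ∀ α : Weight R H L, α.IsNonZero → ∀ x ∈ rootSpace H α, lam x = 0)
    {χ ψ : H → R} (hχψ : χ + ψ ≠ 0) {x y : L} (hx : x ∈ rootSpace H χ) (hy : y ∈ rootSpace H ψ) :
    lam ⁅x, y⁆ = 0 := by
  have hxy : ⁅x, y⁆ ∈ rootSpace H (χ + ψ) := lie_mem_genWeightSpace_of_mem_genWeightSpace hx hy
  by_cases hbot : rootSpace H (χ + ψ) = ⊥
  · rw [hbot, LieSubmodule.mem_bot] at hxy
    rw [hxy, map_zero]
  · exact hlam ⟨χ + ψ, hbot⟩ hχψ _ hxy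

end Stabilizer

section Cartan

variable {K L M : Type*} [Field K] [LieRing L] [LieAlgebra K L] [FiniteDimensional K L]
  [AddCommGroup M] [Module K M] {H : LieSubalgebra K L} {lam : L →ₗ[K] M}

lemma rootSpace_le_coadjointStabilizer_iff [LieRing.IsNilpotent H] [IsTriangularizable K H L]
    (hlam : ∀ α : Weight K H L, α.IsNonZero → ∀ x ∈ rootSpace H α, lam x = 0) {χ : H → K} :
    (rootSpace H χ).toSubmodule ≤ (coadjointStabilizer lam).toSubmodule ↔
      ∀ x ∈ rootSpace H χ, ∀ y ∈ rootSpace H (-χ), lam ⁅x, y⁆ = 0 := by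
  refine ⟨fun h x hx y _ ↦ h hx y, fun h x hx Y ↦ ?_⟩
  have hY : Y ∈ ⨆ ψ : H → K, rootSpace H ψ := by
    rw [iSup_genWeightSpace_eq_top]
    exact LieSubmodule.mem_top Y
  induction hY using LieSubmodule.iSup_induction' with
  | mem ψ y hy =>
    by_cases hχψ : χ + ψ = 0
    · rw [eq_neg_of_add_eq_zero_right hχψ] at hy
      exact h x hx y hy
    · exact apply_lie_eq_zero_of_mem_rootSpace_of_add_ne_zero hlam hχψ hx hy
  | zero => rw [lie_zero, map_zero]
  | add y z _ _ hy hz => rw [lie_add, map_add, hy, hz, add_zero]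

lemma cartan_le_coadjointStabilizer [H.IsCartanSubalgebra] [IsLieAbelian H]
    [IsTriangularizable K H L]
    (hlam : ∀ α : Weight K H L, α.IsNonZero → ∀ x ∈ rootSpace H α, lam x = 0) :
    H ≤ coadjointStabilizer lam := by
  suffices (rootSpace H (0 : H → K)).toSubmodule ≤ (coadjointStabilizer lam).toSubmodule by
    rwa [rootSpace_zero_eq] at this
  rw [rootSpace_le_coadjointStabilizer_iff hlam, neg_zero, rootSpace_zero_eq]
  intro x hx y hy
  have lie_eq_zero : ⁅x, y⁆ = 0 :=
    congrArg Subtype.val (trivial_lie_zero H H ⟨x, hx⟩ ⟨y, hy⟩)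
  rw [lie_eq_zero, map_zero]

end Cartan

theorem coadjoint_stabilizer_eq_cartan_sup_singular_rootSpaces_general
    {K L M : Type*} [Field K] [CharZero K] [LieRing L] [LieAlgebra K L] [FiniteDimensional K L]
    [IsKilling K L] [AddCommGroup M] [Module K M]
    (H : LieSubalgebra K L) [H.IsCartanSubalgebra] [IsTriangularizable K H L]
    (lam : L →ₗ[K] M)
    (hlam : ∀ α : H →ₗ[K] K, α ≠ 0 → rootSpace H (α : H → K) ≠ ⊥ →
      ∀ x ∈ rootSpace H (α : H → K), lam x = 0)
    (Δsing : Set (H →ₗ[K] K))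
    (hΔsing : ∀ β : H →ₗ[K] K, β ∈ Δsing ↔
      β ≠ 0 ∧ rootSpace H (β : H → K) ≠ ⊥ ∧
        ∀ x ∈ rootSpace H (β : H → K),
          ∀ y ∈ rootSpace H ((-β : H →ₗ[K] K) : H → K), lam ⁅x, y⁆ = 0) :
    {X : L | ∀ Y : L, lam ⁅X, Y⁆ = 0} =
      ((H.toSubmodule ⊔ ⨆ β ∈ Δsing, (rootSpace H (β : H → K)).toSubmodule :
        Submodule K L) : Set L) := by
  have lam_rootSpace (α : Weight K H L) (hα : α.IsNonZero) : ∀ x ∈ rootSpace H α, lam x = 0 :=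
    hlam α.toLinear (Weight.coe_toLinear_ne_zero_iff.mpr hα) α.genWeightSpace_ne_bot
  have H_le : H ≤ coadjointStabilizer lam := cartan_le_coadjointStabilizer lam_rootSpace
  suffices (coadjointStabilizer lam).toSubmodule =
      H.toSubmodule ⊔ ⨆ β ∈ Δsing, (rootSpace H (β : H → K)).toSubmodule from
    congrArg SetLike.coe this
  apply le_antisymm
  · rw [lieSubalgebra_eq_cartan_sup_iSup_rootSpace H_le]
    refine sup_le_sup_left (iSup₂_le fun α hα ↦ ?_) _
    have α_mem : α.val.toLinear ∈ Δsing := (hΔsing _).mpr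
      ⟨Weight.coe_toLinear_ne_zero_iff.mpr (H.isNonZero_coe_root α), α.val.genWeightSpace_ne_bot,
        (rootSpace_le_coadjointStabilizer_iff lam_rootSpace).mp hα⟩
    exact le_iSup₂_of_le α.val.toLinear α_mem le_rfl
  · exact sup_le H_le <| iSup₂_le fun β hβ ↦
      (rootSpace_le_coadjointStabilizer_iff lam_rootSpace).mpr ((hΔsing β).mp hβ).2.2

/-- Let `H` be a Cartan subalgebra of a finite-dimensional complex semisimple
Lie algebra `L` and let `λ : L → ℂ` be a linear functional vanishing on every root space.
Then `{X | λ [X, Y] = 0 for all Y} = H ⊕ Σ_{β ∈ Δ_sing} g^β`, where `Δ_sing` is the set of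
roots `β` with `λ ([g^β, g^{-β}]) = 0` (the singular roots of `λ`). -/
theorem coadjoint_stabilizer_eq_cartan_sup_singular_rootSpaces
    {L : Type*} [LieRing L] [LieAlgebra ℂ L] [FiniteDimensional ℂ L]
    [LieAlgebra.IsSemisimple ℂ L]
    (H : LieSubalgebra ℂ L) [H.IsCartanSubalgebra]
    (lam : L →ₗ[ℂ] ℂ)
    (hlam : ∀ α : H →ₗ[ℂ] ℂ, α ≠ 0 → LieAlgebra.rootSpace H (α : H → ℂ) ≠ ⊥ →
      ∀ x ∈ LieAlgebra.rootSpace H (α : H → ℂ), lam x = 0)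
    (Δsing : Set (H →ₗ[ℂ] ℂ))
    (hΔsing : ∀ β : H →ₗ[ℂ] ℂ, β ∈ Δsing ↔
      β ≠ 0 ∧ LieAlgebra.rootSpace H (β : H → ℂ) ≠ ⊥ ∧
        ∀ x ∈ LieAlgebra.rootSpace H (β : H → ℂ),
          ∀ y ∈ LieAlgebra.rootSpace H ((-β : H →ₗ[ℂ] ℂ) : H → ℂ), lam ⁅x, y⁆ = 0) :
    {X : L | ∀ Y : L, lam ⁅X, Y⁆ = 0} =
      ((H.toSubmodule ⊔ ⨆ β ∈ Δsing, (LieAlgebra.rootSpace H (β : H → ℂ)).toSubmodule :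
        Submodule ℂ L) : Set L) :=
  coadjoint_stabilizer_eq_cartan_sup_singular_rootSpaces_general H lam hlam Δsing hΔsing
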